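/- arXiv:1711.11302 — 4 statements merged into one kernel-verified Lean document; each statement's English description precedes it below -/
import Mathlib

section
/- A real number λ is an eigenvalue of the periodic Anderson Hamiltonian H_per^(N) if and only if Tr(M̃_N(λ)) = 2, where M̃_N(λ) = T(λ − V_N)·T(λ − V_{N−1})···T(λ − V_1). Equivalently, λ is an eigenvalue of H_per^(N) if and only if 1 is an eigenvalue of the SL(2,ℝ) matrix M̃_N(λ). -/
/-- The transfer matrix `T(x)` with rows `(x, −1)` and `(1, 0)`. -/
def transferT (x : ℝ) : Matrix (Fin 2) (Fin 2) ℝ := !![x, -1; 1, 0]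

/-- The matrix product `M̃_n(λ) = T(λ − V_n) ⋯ T(λ − V_1)`. -/
noncomputable def transferMtilde (V : ℕ → ℝ) (l : ℝ) : ℕ → Matrix (Fin 2) (Fin 2) ℝ
  | 0 => 1
  | (n+1) => transferT (l - V (n+1)) * transferMtilde V l n

/-- The periodic Anderson Hamiltonian on `[1, N]`: diagonal `V_1, …, V_N`,
`1` on the two off-diagonals and at the corners `(1,N)`, `(N,1)`. -/
def andersonHper (N : ℕ) (V : ℕ → ℝ) : Matrix (Fin N) (Fin N) ℝ :=
  Matrix.of fun i j =>
    if (i : ℕ) = (j : ℕ) then V ((i : ℕ) + 1)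
    else if (i : ℕ) + 1 = (j : ℕ) ∨ (j : ℕ) + 1 = (i : ℕ) then 1
    else if ((i : ℕ) = 0 ∧ (j : ℕ) = N - 1) ∨ ((i : ℕ) = N - 1 ∧ (j : ℕ) = 0) then 1
    else 0

lemma aux_det (V : ℕ → ℝ) (l : ℝ) (n : ℕ) : (transferMtilde V l n).det = 1 := by
  induction n with
  | zero => simp [transferMtilde]
  | succ n ih =>
    rw [transferMtilde, Matrix.det_mul, ih]
    simp [transferT, Matrix.det_fin_two]

lemma aux_trace (M : Matrix (Fin 2) (Fin 2) ℝ) (h : M.det = 1) :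
    (∃ z : Fin 2 → ℝ, z ≠ 0 ∧ M.mulVec z = z) ↔ M.trace = 2 := by
  have h1 := Matrix.exists_mulVec_eq_zero_iff (M := M - 1)
  simp only [Matrix.sub_mulVec, Matrix.one_mulVec, sub_eq_zero] at h1
  rw [h1]
  simp only [Matrix.det_fin_two, Matrix.trace_fin_two, Matrix.sub_apply, Matrix.one_apply] at *
  norm_num
  constructor <;> intro h2 <;> linarith

lemma aux_step0 (V : ℕ → ℝ) (l : ℝ) (n : ℕ) (z : Fin 2 → ℝ) :
    (transferMtilde V l (n+1)).mulVec z 0 =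
      (l - V (n+1)) * (transferMtilde V l n).mulVec z 0 - (transferMtilde V l n).mulVec z 1 := by
  simp only [transferMtilde]
  rw [← Matrix.mulVec_mulVec]
  simp [transferT, Matrix.mulVec, dotProduct, Fin.sum_univ_two]
  ring

lemma aux_step1 (V : ℕ → ℝ) (l : ℝ) (n : ℕ) (z : Fin 2 → ℝ) :
    (transferMtilde V l (n+1)).mulVec z 1 = (transferMtilde V l n).mulVec z 0 := by
  simp only [transferMtilde]
  rw [← Matrix.mulVec_mulVec]
  simp [transferT, Matrix.mulVec, dotProduct, Fin.sum_univ_two]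

lemma aux_iter (V : ℕ → ℝ) (l : ℝ) (N : ℕ) (y : ℕ → ℝ)
    (hy : ∀ n < N, y (n+2) = (l - V (n+1)) * y (n+1) - y n) (n : ℕ) (hn : n ≤ N) :
    (transferMtilde V l n).mulVec ![y 1, y 0] = ![y (n+1), y n] := by
  induction n with
  | zero => simp [transferMtilde]
  | succ n ih =>
    have ih := ih (by omega)
    ext i
    fin_cases i
    · simp only [Fin.zero_eta, aux_step0, ih]
      simp [hy n (by omega)]
    · simp only [Fin.mk_one, aux_step1, ih]
      simp

lemma aux_mulVec (N : ℕ) (hN : 3 ≤ N) (V : ℕ → ℝ) (x : Fin N → ℝ) (i p q : Fin N)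
    (hp : (p : ℕ) = if (i : ℕ) + 1 = N then 0 else (i : ℕ) + 1)
    (hq : (q : ℕ) = if (i : ℕ) = 0 then N - 1 else (i : ℕ) - 1) :
    (andersonHper N V).mulVec x i = V (i+1) * x i + x p + x q := by
  have key : ∀ j, andersonHper N V i j * x j = (if j = i then V (i+1) * x j else 0)
      + (if j = p then x j else 0) + (if j = q then x j else 0) := by
    intro j
    have hi := i.2
    have hj := j.2
    simp only [andersonHper, Matrix.of_apply, Fin.ext_iff]
    split_ifs at * <;> first | omega | simp
  simp only [Matrix.mulVec, dotProduct, key, Finset.sum_add_distrib]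
  simp

lemma aux_main (N : ℕ) (hN : 3 ≤ N) (V : ℕ → ℝ) (l : ℝ) :
    (∃ x : Fin N → ℝ, x ≠ 0 ∧ (andersonHper N V).mulVec x = l • x) ↔
      ∃ z : Fin 2 → ℝ, z ≠ 0 ∧ (transferMtilde V l N).mulVec z = z := by
  constructor
  · rintro ⟨x, hx, h⟩
    -- `y n = x_n` with cyclic indices, `y 0 = x_N`, `y (N+1) = x_1`
    let y : ℕ → ℝ := fun n => if n = 0 then x ⟨N - 1, by omega⟩ else
      if hn : n - 1 < N then x ⟨n - 1, hn⟩ else x ⟨0, by omega⟩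
    have y0 : y 0 = x ⟨N - 1, by omega⟩ := by simp [y]
    have yN1 : y (N+1) = x ⟨0, by omega⟩ := by simp [y]
    have ys : ∀ n (hn : n < N), y (n+1) = x ⟨n, hn⟩ := by
      intro n hn
      simp [y, hn]
    have yN : y N = y 0 := by
      obtain ⟨m, rfl⟩ : ∃ m, N = m + 1 := ⟨N - 1, by omega⟩
      rw [ys m (by omega), y0]
      rfl
    have hy : ∀ n < N, y (n+2) = (l - V (n+1)) * y (n+1) - y n := by
      intro n hn
      have e : ∃ p : Fin N, (p : ℕ) = (if n + 1 = N then 0 else n + 1) ∧ y (n+2) = x p := by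
        by_cases c : n + 1 = N
        · refine ⟨⟨0, by omega⟩, by simp [c], ?_⟩
          rw [← yN1, ← c]
        · exact ⟨⟨n+1, by omega⟩, by simp [c], ys (n+1) (by omega)⟩
      have e' : ∃ q : Fin N, (q : ℕ) = (if n = 0 then N - 1 else n - 1) ∧ y n = x q := by
        rcases n with _ | n
        · exact ⟨⟨N-1, by omega⟩, by simp, y0⟩
        · exact ⟨⟨n, by omega⟩, by simp, ys n (by omega)⟩
      obtain ⟨p, hp, hp'⟩ := e
      obtain ⟨q, hq, hq'⟩ := e'
      have := congrFun h ⟨n, hn⟩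
      rw [aux_mulVec N hN V x ⟨n, hn⟩ p q hp hq] at this
      simp only [Pi.smul_apply, smul_eq_mul] at this
      rw [hp', hq', ys n hn]
      linarith
    have it := aux_iter V l N y hy
    refine ⟨![y 1, y 0], ?_, ?_⟩
    · intro hz
      apply hx
      ext i
      have := congrFun (it i i.2.le) 0
      rw [hz] at this
      simp only [Matrix.mulVec_zero] at this
      simp only [Matrix.cons_val_zero, Pi.zero_apply, ys i i.2] at this
      exact this.symm
    · rw [it N le_rfl, yN, yN1, ys 0 (by omega)]
  · rintro ⟨z, hz, h⟩
    let y : ℕ → ℝ := fun n => (transferMtilde V l n).mulVec z 1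
    have y1 : ∀ n, (transferMtilde V l n).mulVec z 0 = y (n+1) := fun n =>
      (aux_step1 V l n z).symm
    have hy : ∀ n, y (n+2) = (l - V (n+1)) * y (n+1) - y n := by
      intro n
      rw [← y1, ← y1, aux_step0]
    have z0 : y 0 = z 1 := by simp [y, transferMtilde]
    have z1 : y 1 = z 0 := by rw [← y1]; simp [transferMtilde]
    have yN : y N = y 0 := by rw [z0, ← congrFun h 1]
    have yN1 : y (N+1) = y 1 := by rw [z1, ← y1, congrFun h 0]
    refine ⟨fun i => y (i+1), ?_, ?_⟩
    · intro hx
      apply hz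
      have a := congrFun hx ⟨0, by omega⟩
      have b := congrFun hx ⟨N-1, by omega⟩
      simp only [Pi.zero_apply, zero_add] at a b
      rw [show N - 1 + 1 = N by omega, yN, z0] at b
      rw [z1] at a
      ext i
      fin_cases i
      · exact a
      · exact b
    · ext ⟨n, hn⟩
      have hp : (if n + 1 = N then 0 else n + 1) < N := by split_ifs <;> omega
      have hq : (if n = 0 then N - 1 else n - 1) < N := by split_ifs <;> omega
      rw [aux_mulVec N hN V _ ⟨n, hn⟩ ⟨_, hp⟩ ⟨_, hq⟩ rfl rfl]
      have ep : y ((if n + 1 = N then 0 else n + 1) + 1) = y (n+2) := by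
        split_ifs with c
        · rw [show n + 2 = N + 1 by omega, yN1]
        · rfl
      have eq : y ((if n = 0 then N - 1 else n - 1) + 1) = y n := by
        split_ifs with c
        · rw [show N - 1 + 1 = N by omega, yN, c]
        · rw [show n - 1 + 1 = n by omega]
      simp only [Pi.smul_apply, smul_eq_mul]
      rw [ep, eq, hy]
      ring

/-- `λ` is an eigenvalue of the periodic Anderson Hamiltonian iff
`Tr(M̃_N(λ)) = 2`, equivalently iff `1` is an eigenvalue of `M̃_N(λ)`. -/
theorem periodic_eigenvalue_iff_trace_eq_two (N : ℕ) (hN : 3 ≤ N) (V : ℕ → ℝ) (l : ℝ) :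
    ((∃ x : Fin N → ℝ, x ≠ 0 ∧ (andersonHper N V).mulVec x = l • x) ↔
      (transferMtilde V l N).trace = 2) ∧
    ((∃ x : Fin N → ℝ, x ≠ 0 ∧ (andersonHper N V).mulVec x = l • x) ↔
      ∃ z : Fin 2 → ℝ, z ≠ 0 ∧ (transferMtilde V l N).mulVec z = z) := by
  have h := aux_main N hN V l
  exact ⟨h.trans (aux_trace _ (aux_det V l N)), h⟩
end

section
/- For every λ ∈ ℝ one has (u_{N+1}(λ), u_N(λ)) ≠ (0, 0). Moreover, any continuous lift of the Prüfer phase is strictly increasing: if θ : ℝ → ℝ is continuous and satisfies cos(θ(λ)) = u_{N+1}(λ)/r_N(λ) and sin(θ(λ)) = u_N(λ)/r_N(λ) for all λ, where r_N(λ) = √(u_{N+1}(λ)² + u_N(λ)²), then θ is strictly increasing on ℝ. -/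
/-- The polynomials `u_k(λ)` defined by `u_0 = 0`, `u_1 = 1`,
`u_{k+1}(λ) = (V_k − λ) u_k(λ) − u_{k−1}(λ)`. -/
noncomputable def andersonU (V : ℕ → ℝ) : ℕ → ℝ → ℝ
  | 0 => fun _ => 0
  | 1 => fun _ => 1
  | (k+2) => fun l => (V (k+1) - l) * andersonU V (k+1) l - andersonU V k l

/-- The Prüfer radius `r_N(λ) = √(u_{N+1}(λ)² + u_N(λ)²)`. -/
noncomputable def prueferR (V : ℕ → ℝ) (N : ℕ) (l : ℝ) : ℝ :=
  Real.sqrt ((andersonU V (N + 1) l) ^ 2 + (andersonU V N l) ^ 2)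

lemma andersonU_wronskian (V : ℕ → ℝ) (l : ℝ) (k : ℕ) :
    ∃ a b : ℝ, HasDerivAt (andersonU V (k + 1)) a l ∧ HasDerivAt (andersonU V (k + 2)) b l ∧
      1 ≤ a * andersonU V (k + 2) l - b * andersonU V (k + 1) l := by
  induction k with
  | zero =>
    refine ⟨0, -1, ?_, ?_, ?_⟩
    · have : andersonU V (0 + 1) = fun _ => (1 : ℝ) := by funext x; simp [andersonU]
      rw [this]; exact hasDerivAt_const _ _
    · have : andersonU V (0 + 2) = fun x => V 1 - x := by funext x; simp [andersonU]
      rw [this]; exact (hasDerivAt_id l).const_sub (V 1)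
    · simp [andersonU]
  | succ k ih =>
    obtain ⟨a, b, ha, hb, h⟩ := ih
    refine ⟨b, (-1) * andersonU V (k + 2) l + (V (k + 2) - l) * b - a, hb, ?_, ?_⟩
    · have : andersonU V (k + 1 + 2) = fun x =>
          (V (k + 2) - x) * andersonU V (k + 2) x - andersonU V (k + 1) x := by
        funext x; simp [andersonU]
      rw [this]
      exact (((hasDerivAt_id l).const_sub (V (k + 2))).mul hb).sub ha
    · have : andersonU V (k + 1 + 2) l =
          (V (k + 2) - l) * andersonU V (k + 2) l - andersonU V (k + 1) l := by
        simp [andersonU]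
      rw [this]
      change 1 ≤ b * _ - _ * andersonU V (k + 2) l
      nlinarith [sq_nonneg (andersonU V (k + 2) l)]

/-- `(u_{N+1}(λ), u_N(λ)) ≠ (0,0)` for all `λ`, and any continuous
lift of the Prüfer phase is strictly increasing. -/
theorem prufer_phase_strictMono (N : ℕ) (hN : 1 ≤ N) (V : ℕ → ℝ) :
    (∀ l : ℝ, (andersonU V (N + 1) l, andersonU V N l) ≠ (0, 0)) ∧
    (∀ θ : ℝ → ℝ, Continuous θ →
      (∀ l : ℝ, Real.cos (θ l) = andersonU V (N + 1) l / prueferR V N l ∧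
        Real.sin (θ l) = andersonU V N l / prueferR V N l) →
      StrictMono θ) := by
  obtain ⟨k, rfl⟩ : ∃ k, N = k + 1 := ⟨N - 1, by omega⟩
  have hpos : ∀ l, 0 < andersonU V (k + 1 + 1) l ^ 2 + andersonU V (k + 1) l ^ 2 := by
    intro l
    obtain ⟨a, b, -, -, h⟩ := andersonU_wronskian V l k
    by_contra hc
    have h1 : andersonU V (k + 2) l = 0 := by
      change ¬ (0 < andersonU V (k + 2) l ^ 2 + andersonU V (k + 1) l ^ 2) at hc
      nlinarith [sq_nonneg (andersonU V (k + 2) l), sq_nonneg (andersonU V (k + 1) l)]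
    have h2 : andersonU V (k + 1) l = 0 := by
      nlinarith [sq_nonneg (andersonU V (k + 1 + 1) l), sq_nonneg (andersonU V (k + 1) l)]
    rw [h1, h2] at h
    norm_num at h
  refine ⟨?_, ?_⟩
  · intro l h
    have := hpos l
    rw [Prod.mk.injEq] at h
    rw [h.1, h.2] at this
    norm_num at this
  intro θ hθ hcs
  have key : ∀ l, ∃ d, 0 < d ∧ HasDerivAt θ d l := by
    intro l
    obtain ⟨a, b, ha, hb, h⟩ := andersonU_wronskian V l k
    have hr : 0 < prueferR V (k + 1) l := Real.sqrt_pos.2 (hpos l)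
    have hR : ∃ r', HasDerivAt (prueferR V (k + 1)) r' l :=
      ⟨_, ((hb.pow 2).add (ha.pow 2)).sqrt (hpos l).ne'⟩
    obtain ⟨r', hR⟩ := hR
    have hF : HasDerivAt (fun m => Real.sin (θ m - θ l))
        ((a * andersonU V (k + 2) l - b * andersonU V (k + 1) l)
          / prueferR V (k + 1) l ^ 2) l := by
      have hd := (((ha.div hR hr.ne').mul_const (andersonU V (k + 2) l / prueferR V (k + 1) l)).sub
        ((hb.div hR hr.ne').mul_const (andersonU V (k + 1) l / prueferR V (k + 1) l)))
      have he : (fun m => Real.sin (θ m - θ l)) = fun m =>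
          andersonU V (k + 1) m / prueferR V (k + 1) m *
            (andersonU V (k + 2) l / prueferR V (k + 1) l) -
          andersonU V (k + 2) m / prueferR V (k + 1) m *
            (andersonU V (k + 1) l / prueferR V (k + 1) l) := by
        funext m
        rw [Real.sin_sub, (hcs m).1, (hcs m).2, (hcs l).1, (hcs l).2]
      rw [he]
      refine hd.congr_deriv ?_
      field_simp
      ring
    have hA : HasDerivAt Real.arcsin 1 (Real.sin (θ l - θ l)) := by
      have := Real.hasDerivAt_arcsin (x := 0) (by norm_num) (by norm_num)
      simpa using this
    refine ⟨_, ?_, ((HasDerivAt.comp l hA hF).add_const (θ l)).congr_of_eventuallyEq ?_⟩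
    · rw [one_mul]
      exact div_pos (by linarith) (by positivity)
    · have hc : Filter.Tendsto (fun m => θ m - θ l) (nhds l) (nhds 0) := by
        have : Continuous (fun m => θ m - θ l) := by fun_prop
        simpa using this.tendsto l
      have hI := hc (Icc_mem_nhds (a := -(Real.pi / 2)) (b := Real.pi / 2)
        (by linarith [Real.pi_pos]) (by linarith [Real.pi_pos]))
      filter_upwards [hI] with m hm
      simp only [Function.comp]
      rw [Real.arcsin_sin hm.1 hm.2]
      ring
  refine strictMono_of_deriv_pos fun l => ?_
  obtain ⟨d, hd, hdd⟩ := key l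
  rw [hdd.deriv]
  exact hd
end

section
/- Coarea-type sampling lemma: let θ : ℝ → ℝ be continuously differentiable with θ′(λ) > 0 for all λ, and let G : ℝ → ℝ be continuous with compact support. Then the set S = {λ ∈ supp G : θ(λ) ∈ π/2 + πℤ} is finite, and Σ_{λ ∈ S} G(λ) = lim_{ε→0⁺} (1/(2ε)) ∫_ℝ G(λ)·θ′(λ)·1[∃ n ∈ ℤ, |θ(λ) − π/2 − πn| < ε] dλ. -/
open Filter

lemma aux_avg (H : ℝ → ℝ) (hH : Continuous H) (c : ℝ) :
    Tendsto (fun ε : ℝ => (1 / (2 * ε)) * ∫ u : ℝ,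
      Set.indicator (Set.Ioo (c - ε) (c + ε)) H u) (nhdsWithin 0 (Set.Ioi 0)) (nhds (H c)) := by
  have hF : ∀ b, HasDerivAt (fun u => ∫ x in (0:ℝ)..u, H x) (H b) b := fun b =>
    (hH.integral_hasStrictDerivAt 0 b).hasDerivAt
  have h1 : HasDerivAt (fun t : ℝ => (∫ x in (0:ℝ)..(c + t), H x) - ∫ x in (0:ℝ)..(c - t), H x)
      (H c + H c) 0 := by
    have ha : HasDerivAt (fun t : ℝ => ∫ x in (0:ℝ)..(c + t), H x) (H c) 0 := by
      have := HasDerivAt.comp_const_add (f := fun u => ∫ x in (0:ℝ)..u, H x) (f' := H c) c 0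
        (by simpa using hF c)
      simpa using this
    have hb : HasDerivAt (fun t : ℝ => ∫ x in (0:ℝ)..(c - t), H x) (-H c) 0 := by
      have := HasDerivAt.comp_const_sub (f := fun u => ∫ x in (0:ℝ)..u, H x) (f' := H c) c 0
        (by simpa using hF c)
      simpa using this
    have := ha.fun_sub hb
    simpa using this
  have h2 := (h1.tendsto_slope_zero_right).const_mul (1/2 : ℝ)
  have e : (1/2 : ℝ) * (H c + H c) = H c := by ring
  rw [e] at h2
  refine h2.congr' ?_
  filter_upwards [self_mem_nhdsWithin] with ε hε
  have hε : (0:ℝ) < ε := hε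
  rw [MeasureTheory.integral_indicator measurableSet_Ioo,
    ← MeasureTheory.integral_Ioc_eq_integral_Ioo,
    ← intervalIntegral.integral_of_le (by linarith)]
  simp only [zero_add, add_zero, sub_zero, sub_self, smul_eq_mul]
  rw [intervalIntegral.integral_interval_sub_left (hH.intervalIntegrable _ _)
    (hH.intervalIntegrable _ _)]
  field_simp

lemma aux_line (H : ℝ → ℝ) (hH : Continuous H) (N : Finset ℤ)
    (hN : ∀ u, H u ≠ 0 → ∀ n : ℤ, |u - Real.pi / 2 - Real.pi * n| < 1 → n ∈ N) :
    Tendsto (fun ε : ℝ => (1 / (2 * ε)) * ∫ u : ℝ,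
      H u * Set.indicator {u : ℝ | ∃ n : ℤ, |u - Real.pi / 2 - Real.pi * n| < ε}
        (fun _ => (1 : ℝ)) u) (nhdsWithin 0 (Set.Ioi 0))
      (nhds (∑ n ∈ N, H (Real.pi / 2 + Real.pi * n))) := by
  have h := tendsto_finsetSum N fun n _ => aux_avg H hH (Real.pi / 2 + Real.pi * n)
  refine h.congr' ?_
  filter_upwards [Ioo_mem_nhdsGT (show (0:ℝ) < 1 by norm_num)] with ε hε
  rw [← Finset.mul_sum, ← MeasureTheory.integral_finsetSum]
  · congr 1
    congr 1
    ext u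
    have hmem : ∀ n : ℤ, u ∈ Set.Ioo (Real.pi / 2 + Real.pi * n - ε) (Real.pi / 2 + Real.pi * n + ε)
        ↔ |u - Real.pi / 2 - Real.pi * n| < ε := by
      intro n
      rw [abs_lt, Set.mem_Ioo]
      constructor <;> rintro ⟨_, _⟩ <;> constructor <;> linarith
    by_cases h0 : H u = 0
    · simp [Set.indicator_apply, h0]
    by_cases hu : ∃ n : ℤ, |u - Real.pi / 2 - Real.pi * n| < ε
    · obtain ⟨n, hn⟩ := hu
      rw [Finset.sum_eq_single n]
      · rw [Set.indicator_of_mem ((hmem n).2 hn), Set.indicator_of_mem (show u ∈ {u : ℝ | ∃ n : ℤ, |u - Real.pi / 2 - Real.pi * n| < ε} from ⟨n, hn⟩), mul_one]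
      · intro m _ hmn
        apply Set.indicator_of_notMem
        rw [hmem]
        intro hm
        have hπ := Real.pi_gt_three
        rw [abs_lt] at hm hn
        have h1 := hε.2
        rcases lt_or_gt_of_ne hmn with h | h
        · have : (m:ℝ) + 1 ≤ n := by exact_mod_cast h
          nlinarith
        · have : (n:ℝ) + 1 ≤ m := by exact_mod_cast h
          nlinarith
      · intro hnN
        exact absurd (hN u h0 n (hn.trans hε.2)) hnN
    · rw [Set.indicator_of_notMem (show u ∉ {u : ℝ | ∃ n : ℤ, |u - Real.pi / 2 - Real.pi * n| < ε} from hu), mul_zero]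
      apply Finset.sum_eq_zero
      intro n _
      apply Set.indicator_of_notMem
      rw [hmem]
      exact fun h => hu ⟨n, h⟩
  · intro n _
    rw [MeasureTheory.integrable_indicator_iff measurableSet_Ioo]
    exact (hH.continuousOn.integrableOn_Icc).mono_set Set.Ioo_subset_Icc_self

/-- coarea-type sampling lemma. If `θ` is `C¹` with `θ′ > 0` and `G` is
continuous with compact support, then `S = {λ ∈ supp G : θ(λ) ∈ π/2 + πℤ}` is finite and
`Σ_{λ∈S} G(λ) = lim_{ε→0⁺} (1/(2ε)) ∫ G(λ) θ′(λ) 1[dist(θ(λ), π/2 + πℤ) < ε] dλ`. -/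
theorem coarea_sampling (θ : ℝ → ℝ) (hθ : ContDiff ℝ 1 θ) (hθ' : ∀ l, 0 < deriv θ l)
    (G : ℝ → ℝ) (hG : Continuous G) (hGsupp : HasCompactSupport G) :
    {l : ℝ | l ∈ Function.support G ∧ ∃ n : ℤ, θ l = Real.pi / 2 + Real.pi * n}.Finite ∧
    Tendsto
      (fun ε : ℝ => (1 / (2 * ε)) * ∫ l : ℝ,
        G l * deriv θ l *
          Set.indicator {l : ℝ | ∃ n : ℤ, |θ l - Real.pi / 2 - Real.pi * n| < ε}
            (fun _ => (1 : ℝ)) l)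
      (nhdsWithin 0 (Set.Ioi 0))
      (nhds (∑' l : {l : ℝ | l ∈ Function.support G ∧
          ∃ n : ℤ, θ l = Real.pi / 2 + Real.pi * n}, G l)) := by
  have hst : ∀ x, HasStrictDerivAt θ (deriv θ x) x := fun x =>
    hθ.contDiffAt.hasStrictDerivAt (by norm_num)
  have hmono : StrictMono θ := strictMono_of_deriv_pos hθ'
  have hinj := hmono.injective
  have hopen : IsOpenMap θ := isOpenMap_of_hasStrictDerivAt hst fun x => (hθ' x).ne'
  have hoe : Topology.IsOpenEmbedding θ :=
    .of_continuous_injective_isOpenMap hθ.continuous hinj hopen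
  set H : ℝ → ℝ := Function.extend θ G 0 with hHdef
  have hHθ : ∀ x, H (θ x) = G x := fun x => hinj.extend_apply _ _ _
  have hH0 : ∀ u, u ∉ Set.range θ → H u = 0 := fun u hu => by
    rw [hHdef, Function.extend_apply' _ _ _ hu]; rfl
  have hHts := hGsupp.tsupport_extend_zero hθ.continuous hinj
  have hHc : Continuous H := by
    refine continuous_of_tsupport fun u hu => ?_
    rw [hHts] at hu
    obtain ⟨x, -, rfl⟩ := hu
    rw [← hoe.continuousAt_iff]
    have : H ∘ θ = G := funext hHθ
    rw [this]
    exact hG.continuousAt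
  have hHcomp : HasCompactSupport H := by
    rw [HasCompactSupport, hHts]
    exact hGsupp.isCompact.image hθ.continuous
  obtain ⟨R, hR⟩ := hHcomp.isCompact.isBounded.exists_norm_le
  have hR' : ∀ u, H u ≠ 0 → |u| ≤ R := fun u hu => hR u (subset_tsupport _ hu)
  set N : Finset ℤ := Finset.Icc (-⌈R + 2⌉) ⌈R + 2⌉ with hNdef
  have hN : ∀ u, H u ≠ 0 → ∀ n : ℤ, |u - Real.pi / 2 - Real.pi * n| < 1 → n ∈ N := by
    intro u hu n hn
    have h1 := hR' u hu
    have hπ := Real.pi_gt_three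
    have hπ4 := Real.pi_le_four
    have hc := Int.le_ceil (R + 2)
    rw [abs_lt] at hn
    rw [abs_le] at h1
    rw [hNdef, Finset.mem_Icc]
    constructor
    · have : -(R+2) ≤ (n:ℝ) := by
        by_contra! h
        nlinarith
      have : ((-⌈R+2⌉ : ℤ):ℝ) ≤ n := by push_cast; linarith
      exact_mod_cast this
    · have : (n:ℝ) ≤ R+2 := by
        by_contra! h
        nlinarith
      have : (n:ℝ) ≤ (⌈R+2⌉ : ℤ) := by linarith
      exact_mod_cast this
  have hN0 : ∀ n : ℤ, H (Real.pi / 2 + Real.pi * n) ≠ 0 → n ∈ N := fun n h =>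
    hN _ h n (by simp)
  constructor
  · have hsub : {l : ℝ | l ∈ Function.support G ∧ ∃ n : ℤ, θ l = Real.pi / 2 + Real.pi * n} ⊆
        θ ⁻¹' ((fun n : ℤ => Real.pi / 2 + Real.pi * (n:ℝ)) '' (N : Set ℤ)) := by
      rintro l ⟨hl, n, hn⟩
      refine ⟨n, hN0 n ?_, hn.symm⟩
      rw [← hn, hHθ]
      exact hl
    exact (((N.finite_toSet).image _).preimage hinj.injOn).subset hsub
  · have hlim := aux_line H hHc N hN
    have hsum : ∑' l : {l : ℝ | l ∈ Function.support G ∧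
          ∃ n : ℤ, θ l = Real.pi / 2 + Real.pi * n}, G l =
        ∑ n ∈ N, H (Real.pi / 2 + Real.pi * n) := by
      rw [← tsum_eq_sum (L := .unconditional ℤ) (s := N) (f := fun n : ℤ => H (Real.pi / 2 + Real.pi * n))
        (fun n hn => by by_contra h; exact hn (hN0 n h))]
      symm
      refine tsum_eq_tsum_of_ne_zero_bij (fun l => l.1.2.2.choose) ?_ ?_ ?_
      · intro a b hab
        have ha := a.1.2.2.choose_spec
        have hb := b.1.2.2.choose_spec
        simp only at hab
        rw [hab, ← hb] at ha
        exact Subtype.ext (Subtype.ext (hinj ha))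
      · intro n hn
        have hn' : H (Real.pi / 2 + Real.pi * n) ≠ 0 := hn
        have hr : Real.pi / 2 + Real.pi * n ∈ Set.range θ := by
          by_contra h
          exact hn' (hH0 _ h)
        obtain ⟨x, hx⟩ := hr
        have hGx : G x ≠ 0 := by rw [← hHθ, hx]; exact hn'
        have p : ∃ n : ℤ, θ x = Real.pi / 2 + Real.pi * n := ⟨n, hx⟩
        refine ⟨⟨⟨x, hGx, p⟩, hGx⟩, ?_⟩
        have hc := p.choose_spec
        have h2 : Real.pi * (n:ℝ) = Real.pi * (p.choose : ℝ) := by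
          have := hx.symm.trans hc
          linarith
        have h3 := mul_left_cancel₀ Real.pi_ne_zero h2
        exact_mod_cast h3.symm
      · intro l
        have hc := l.1.2.2.choose_spec
        rw [← hc, hHθ]
    rw [hsum]
    refine hlim.congr fun ε => ?_
    congr 1
    set K : ℝ → ℝ := fun u => H u * Set.indicator
      {u : ℝ | ∃ n : ℤ, |u - Real.pi / 2 - Real.pi * n| < ε} (fun _ => (1 : ℝ)) u with hK
    have hcv := MeasureTheory.integral_image_eq_integral_abs_deriv_smul (s := Set.univ) (f := θ)
      (f' := deriv θ) MeasurableSet.univ (fun x _ => (hst x).hasDerivAt.hasDerivWithinAt)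
      hinj.injOn K
    rw [Set.image_univ, MeasureTheory.setIntegral_univ,
      MeasureTheory.setIntegral_eq_integral_of_forall_compl_eq_zero
        (fun u hu => by simp [hK, hH0 u hu])] at hcv
    rw [hcv]
    congr 1
    ext l
    rw [abs_of_pos (hθ' l), smul_eq_mul, hK]
    simp only [hHθ]
    have : Set.indicator {u : ℝ | ∃ n : ℤ, |u - Real.pi / 2 - Real.pi * n| < ε}
        (fun _ => (1 : ℝ)) (θ l) = Set.indicator
        {l : ℝ | ∃ n : ℤ, |θ l - Real.pi / 2 - Real.pi * n| < ε} (fun _ => (1 : ℝ)) l := rfl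
    rw [this]
    ring
end

section
/- Eigenvalue characterization via the Prüfer phase: a real number λ is an eigenvalue of H^(N) if and only if φ_N(λ) ∈ {π/2, −π/2}, i.e. if and only if the Prüfer phase of the transfer-matrix vector M_N(λ)(1,0)ᵀ is congruent to π/2 modulo π. -/
/-- The Anderson Hamiltonian on `[1, N]`. -/
def andersonH (N : ℕ) (V : ℕ → ℝ) : Matrix (Fin N) (Fin N) ℝ :=
  Matrix.of fun i j =>
    if (i : ℕ) = (j : ℕ) then V ((i : ℕ) + 1)
    else if (i : ℕ) + 1 = (j : ℕ) ∨ (j : ℕ) + 1 = (i : ℕ) then 1 else 0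

/-- The Prüfer phase `φ_k(λ) = arg(u_{k+1}(λ) + i·u_k(λ))`. -/
noncomputable def prueferPhi (V : ℕ → ℝ) (k : ℕ) (l : ℝ) : ℝ :=
  Complex.arg (((andersonU V (k + 1) l : ℝ) : ℂ) + (andersonU V k l : ℝ) * Complex.I)

lemma andersonU_ne (V : ℕ → ℝ) (l : ℝ) (k : ℕ) :
    ¬ (andersonU V (k + 1) l = 0 ∧ andersonU V k l = 0) := by
  induction k with
  | zero => simp [andersonU]
  | succ k ih =>
    rintro ⟨h1, h2⟩
    apply ih
    refine ⟨h2, ?_⟩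
    simp only [andersonU] at h1
    rw [h2] at h1
    linarith

lemma prueferPhi_iff (V : ℕ → ℝ) (l : ℝ) (k : ℕ) :
    (prueferPhi V k l = Real.pi / 2 ∨ prueferPhi V k l = -(Real.pi / 2)) ↔
      andersonU V (k + 1) l = 0 := by
  have h := andersonU_ne V l k
  unfold prueferPhi
  rw [Complex.arg_eq_pi_div_two_iff, Complex.arg_eq_neg_pi_div_two_iff]
  simp only [Complex.add_re, Complex.add_im, Complex.ofReal_re, Complex.ofReal_im,
    Complex.re_ofReal_mul, Complex.im_ofReal_mul, Complex.I_re, Complex.I_im, mul_zero, mul_one,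
    add_zero, zero_add]
  constructor
  · rintro (h | h) <;> exact h.1
  · intro h0
    rcases lt_trichotomy (andersonU V k l) 0 with h1 | h1 | h1
    · exact Or.inr ⟨h0, h1⟩
    · exact absurd ⟨h0, h1⟩ h
    · exact Or.inl ⟨h0, h1⟩

lemma andersonH_mulVec (N : ℕ) (V f : ℕ → ℝ) (h0 : f 0 = 0) (hN : f (N + 1) = 0) (i : Fin N) :
    (andersonH N V).mulVec (fun j => f ((j : ℕ) + 1)) i
      = V (i + 1) * f (i + 1) + f i + f (i + 2) := by
  have hi := i.2
  simp only [Matrix.mulVec, dotProduct, andersonH, Matrix.of_apply]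
  rw [Fin.sum_univ_eq_sum_range (fun j : ℕ => (if (i : ℕ) = j then V ((i : ℕ) + 1)
    else if (i : ℕ) + 1 = j ∨ j + 1 = (i : ℕ) then 1 else 0) * f (j + 1)) N]
  generalize (i : ℕ) = m at hi
  have key : ∀ j ∈ Finset.range N, (if m = j then V (m + 1)
      else if m + 1 = j ∨ j + 1 = m then 1 else 0) * f (j + 1)
      = (if m = j then V (m + 1) * f (m + 1) else 0) + (if m + 1 = j then f (m + 2) else 0)
        + (if j + 1 = m then f m else 0) := by
    intro j _
    by_cases h1 : m = j
    · subst h1; simp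
    by_cases h2 : m + 1 = j
    · subst h2; simp; omega
    by_cases h3 : j + 1 = m
    · subst h3; simp; intro h; omega
    simp [h1, h2, h3]
  rw [Finset.sum_congr rfl key, Finset.sum_add_distrib, Finset.sum_add_distrib,
    Finset.sum_ite_eq, Finset.sum_ite_eq]
  have e1 : (if m + 1 ∈ Finset.range N then f (m + 2) else 0) = f (m + 2) := by
    split_ifs with h
    · rfl
    · have : m + 1 = N := by simp at h; omega
      rw [← this] at hN
      exact hN.symm
  have e2 : ∑ j ∈ Finset.range N, (if j + 1 = m then f m else 0) = f m := by
    cases m with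
    | zero => simp [h0]
    | succ m =>
      simp only [add_left_inj, Finset.sum_ite_eq', Finset.mem_range]
      rw [if_pos (by omega)]
  rw [e1, e2, if_pos (Finset.mem_range.2 hi)]
  ring

/-- eigenvalue characterization via the Prüfer phase: `λ` is an
eigenvalue of `H^(N)` iff `φ_N(λ) ∈ {π/2, −π/2}`. -/
theorem eigenvalue_iff_prufer_phase (N : ℕ) (hN : 1 ≤ N) (V : ℕ → ℝ) (l : ℝ) :
    (∃ x : Fin N → ℝ, x ≠ 0 ∧ (andersonH N V).mulVec x = l • x) ↔
      (prueferPhi V N l = Real.pi / 2 ∨ prueferPhi V N l = -(Real.pi / 2)) := by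
  rw [prueferPhi_iff]
  constructor
  · rintro ⟨x, hx, he⟩
    let f : ℕ → ℝ := fun k => if h : 1 ≤ k ∧ k ≤ N then x ⟨k - 1, by omega⟩ else 0
    have f0 : f 0 = 0 := by simp [f]
    have fN : f (N + 1) = 0 := by simp [f]
    have fx : (fun j : Fin N => f ((j : ℕ) + 1)) = x := by
      funext j
      have := j.2
      simp only [f]
      rw [dif_pos (by omega)]
      rfl
    have hrec : ∀ m, m < N → f (m + 2) = (l - V (m + 1)) * f (m + 1) - f m := by
      intro m hm
      have h1 := andersonH_mulVec N V f f0 fN ⟨m, hm⟩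
      rw [fx, he, ← fx] at h1
      simp only [Pi.smul_apply, smul_eq_mul] at h1
      linarith
    have ind : ∀ m, m ≤ N → f m = -((-1) ^ m * andersonU V m l * f 1) ∧
        f (m + 1) = -((-1) ^ (m + 1) * andersonU V (m + 1) l * f 1) := by
      intro m
      induction m with
      | zero => intro _; simp [andersonU, f0]
      | succ m ih =>
        intro hm
        obtain ⟨h1, h2⟩ := ih (by omega)
        refine ⟨h2, ?_⟩
        rw [hrec m (by omega), h2, h1]
        simp only [andersonU]
        ring
    have hf1 : f 1 ≠ 0 := by
      intro h
      apply hx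
      rw [← fx]
      funext j
      have := (ind j j.2.le).2
      simpa [h] using this
    have := (ind N le_rfl).2
    rw [fN] at this
    have h2 : ((-1 : ℝ)) ^ (N + 1) ≠ 0 := pow_ne_zero _ (by norm_num)
    simpa [hf1, h2] using this
  · intro h
    let f : ℕ → ℝ := fun k => (-1) ^ k * andersonU V k l
    refine ⟨fun j => f ((j : ℕ) + 1), ?_, ?_⟩
    · intro h0
      have := congrFun h0 ⟨0, hN⟩
      simp [f, andersonU] at this
    · funext i
      rw [andersonH_mulVec N V f (by simp [f, andersonU]) (by simp [f, h]) i]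
      simp only [f, andersonU, Pi.smul_apply, smul_eq_mul]
      ring
end
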